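/- Let ρ_i = C / (log(i+1))^s for constants C > 0 and s > 1/2, and define M(ε) = max{i : ρ_i ≥ ε} (with M(ε) = 0 if no such i exists). Then the entropy integral ∫₀^∞ √(log(M(ε)+1)) dε is finite. -/

import Mathlib

open MeasureTheory Set

/-- If `0 < ε ≤ C / L ^ s`, then `√L` is at most `(C / ε) ^ (1 / (2 s))`. -/
lemma sqrt_le_of_le_div_rpow {C s ε L : ℝ} (hC : 0 < C) (hs : 0 < s) (hε : 0 < ε) (hL : 0 < L)
    (h : ε ≤ C / L ^ s) :
    Real.sqrt L ≤ C ^ (1 / (2 * s)) * ε ^ (-(1 / (2 * s))) := by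
  have hLs : L ^ s ≤ C / ε := (le_div_comm₀ hε (Real.rpow_pos_of_pos hL s)).mp h
  calc Real.sqrt L = (L ^ s) ^ (1 / (2 * s)) := by
        rw [Real.sqrt_eq_rpow, ← Real.rpow_mul hL.le]
        congr 1
        field_simp
    _ ≤ (C / ε) ^ (1 / (2 * s)) := by gcongr
    _ = C ^ (1 / (2 * s)) * ε ^ (-(1 / (2 * s))) := by
        rw [Real.div_rpow hC.le hε.le, Real.rpow_neg hε.le, div_eq_mul_inv]

/-- For `ρ_i = C/(log(i+1))^s` with `C > 0`, `s > 1/2`, and `M(ε) = max{i ≥ 1 : ρ_i ≥ ε}`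
(`M(ε) = 0` if no such `i`), the entropy integral `∫₀^∞ √(log(M(ε)+1)) dε` is finite. -/
theorem stmt3 (C s : ℝ) (hC : 0 < C) (hs : 1 / 2 < s)
    (ρ : ℕ → ℝ) (hρ : ∀ i : ℕ, 1 ≤ i → ρ i = C / (Real.log (i + 1)) ^ s)
    (M : ℝ → ℕ)
    (hM : ∀ ε : ℝ, 0 < ε → ∀ i : ℕ, 1 ≤ i → (ε ≤ ρ i ↔ i ≤ M ε)) :
    IntegrableOn (fun ε : ℝ => Real.sqrt (Real.log ((M ε : ℝ) + 1))) (Ioi 0) := by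
  have hs0 : 0 < s := by linarith
  have hanti : AntitoneOn (fun ε : ℝ => Real.sqrt (Real.log ((M ε : ℝ) + 1))) (Ioi 0) := by
    intro x hx y hy hxy
    have hle : M y ≤ M x := by
      rcases Nat.eq_zero_or_pos (M y) with h | h
      · omega
      · exact (hM x hx _ h).mp (hxy.trans ((hM y hy _ h).mpr le_rfl))
    dsimp only
    gcongr
  have hmeas := aemeasurable_restrict_of_antitoneOn (μ := volume) measurableSet_Ioi hanti
  have hρ1 : 0 < ρ 1 := by
    rw [hρ 1 le_rfl]
    have : 0 < Real.log ((1 : ℕ) + 1) := Real.log_pos (by norm_num)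
    positivity
  rw [← Ioc_union_Ioi_eq_Ioi hρ1.le]
  refine IntegrableOn.union ?_ ?_
  · have hint : IntegrableOn
        (fun ε : ℝ => C ^ (1 / (2 * s)) * ε ^ (-(1 / (2 * s)))) (Ioc 0 (ρ 1)) := by
      refine Integrable.const_mul ?_ _
      refine (intervalIntegrable_iff_integrableOn_Ioc_of_le hρ1.le).mp
        (intervalIntegral.intervalIntegrable_rpow' ?_)
      rw [neg_lt_neg_iff, div_lt_one (by linarith)]
      linarith
    refine hint.mono' (hmeas.mono_set Ioc_subset_Ioi_self).aestronglyMeasurable ?_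
    refine (ae_restrict_iff' measurableSet_Ioc).mpr (ae_of_all _ fun ε hε => ?_)
    have hM1 : 1 ≤ M ε := (hM ε hε.1 1 le_rfl).mp hε.2
    have hMε := (hM ε hε.1 _ hM1).mpr le_rfl
    rw [hρ _ hM1] at hMε
    rw [Real.norm_of_nonneg (Real.sqrt_nonneg _)]
    refine sqrt_le_of_le_div_rpow hC hs0 hε.1 (Real.log_pos ?_) hMε
    have : (1 : ℝ) ≤ M ε := by exact_mod_cast hM1
    linarith
  · refine integrableOn_zero.congr_fun (fun ε hε => ?_) measurableSet_Ioi
    have hM0 : M ε = 0 := by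
      by_contra h
      exact absurd ((hM ε (hρ1.trans hε) 1 le_rfl).mpr (Nat.one_le_iff_ne_zero.mpr h))
        (not_le.mpr hε)
    simp [hM0]
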